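/- Let k ≥ 3 and 1 ≤ j ≤ k−1 be integers and let p = (j·log n + c_n)/C(n,k−j). If c_n → −∞, then with high probability H^k(n,p) contains an isolated j-set, and in particular is not j-connected. -/

import Mathlib

open Filter Asymptotics

open scoped Classical

noncomputable section

/-- The collection of all `k`-element subsets of the vertex set `Fin n`,
    i.e. all potential edges of a `k`-uniform hypergraph on `n` vertices. -/
def kSets (n k : ℕ) : Finset (Finset (Fin n)) :=
  Finset.powersetCard k (Finset.univ : Finset (Fin n))

/-- The probability that the binomial random `k`-uniform hypergraph `H^k(n,p)`
    (each `k`-set an edge independently with probability `p`) has property `Q`. -/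
def binomProb (n k : ℕ) (p : ℝ) (Q : Finset (Finset (Fin n)) → Prop) : ℝ :=
  ∑ H ∈ (kSets n k).powerset,
    (if Q H then p ^ H.card * (1 - p) ^ ((kSets n k).card - H.card) else 0)

/-- The expectation of a real-valued random variable `X` of `H^k(n,p)`. -/
def binomExp (n k : ℕ) (p : ℝ) (X : Finset (Finset (Fin n)) → ℝ) : ℝ :=
  ∑ H ∈ (kSets n k).powerset,
    p ^ H.card * (1 - p) ^ ((kSets n k).card - H.card) * X H

/-- The degree of a vertex set `J` in the hypergraph with edge set `H`:
    the number of edges containing `J`. -/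
def setDegree {n : ℕ} (H : Finset (Finset (Fin n))) (J : Finset (Fin n)) : ℕ :=
  (H.filter (fun e => J ⊆ e)).card

/-- `J` is isolated in `H`: it is contained in no edge. -/
def IsIsolatedSet {n : ℕ} (H : Finset (Finset (Fin n))) (J : Finset (Fin n)) : Prop :=
  ∀ e ∈ H, ¬ J ⊆ e

/-- Two sets `J1`, `J2` are `j`-connected in the hypergraph with edge set `H`:
    there is a walk of edges from one to the other in which consecutive edges
    intersect in at least `j` vertices. -/
def JConn {n : ℕ} (j : ℕ) (H : Finset (Finset (Fin n))) (J1 J2 : Finset (Fin n)) : Prop :=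
  ∃ e1 ∈ H, ∃ e2 ∈ H, J1 ⊆ e1 ∧ J2 ⊆ e2 ∧
    Relation.ReflTransGen (fun e f => e ∈ H ∧ f ∈ H ∧ j ≤ (e ∩ f).card) e1 e2

/-- The hypergraph with edge set `H` is `j`-connected:
    all `j`-sets lie in a single `j`-component, i.e. are pairwise `j`-connected. -/
def JConnectedHG (n j : ℕ) (H : Finset (Finset (Fin n))) : Prop :=
  ∀ J1 J2 : Finset (Fin n), J1.card = j → J2.card = j → JConn j H J1 J2

/-- `C` is a `j`-component of `H`: a maximal nonempty set of pairwise `j`-connected `j`-sets. -/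
def IsJComponent (n j : ℕ) (H : Finset (Finset (Fin n))) (C : Finset (Finset (Fin n))) : Prop :=
  C.Nonempty ∧ (∀ J ∈ C, J.card = j) ∧ (∀ J1 ∈ C, ∀ J2 ∈ C, JConn j H J1 J2) ∧
    ∀ J : Finset (Fin n), J.card = j → (∃ J' ∈ C, JConn j H J J') → J ∈ C

/-- `D_s`: the number of `j`-sets of degree exactly `s`. -/
def numDegSets (n j s : ℕ) (H : Finset (Finset (Fin n))) : ℕ :=
  ((Finset.powersetCard j (Finset.univ : Finset (Fin n))).filter
    (fun J => setDegree H J = s)).card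

/-- The Poisson probability mass function with mean `lam`. -/
def poissonPMF (lam : ℝ) (i : ℕ) : ℝ := Real.exp (-lam) * lam ^ i / (Nat.factorial i)

/-- Total variation distance between the distribution of `D_s` in `H^k(n,p)`
    and the Poisson distribution with mean `lam`. -/
def dTVpoisson (n k j s : ℕ) (p lam : ℝ) : ℝ :=
  (1 / 2) * ∑' i : ℕ, |binomProb n k p (fun H => numDegSets n j s H = i) - poissonPMF lam i|

/-- The probability that the uniform random hypergraph `H^k(n,M)` (chosen uniformly among
    all `k`-uniform hypergraphs on `Fin n` with exactly `M` edges) has property `Q`. -/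
def uniformProb (n k M : ℕ) (Q : Finset (Finset (Fin n)) → Prop) : ℝ :=
  (((Finset.powersetCard M (kSets n k)).filter Q).card : ℝ) /
    ((Finset.powersetCard M (kSets n k)).card : ℝ)

/-!
Let `D₀` be the number of isolated `j`-sets and `N = C(n-j,k-j)` the number of `k`-sets containing
a given `j`-set, so that `𝔼 D₀ = C(n,j) (1-p)^N`. Two distinct `j`-sets lie together in at most
`C(n-j-1,k-j-1)` of the `k`-sets, so by Bernoulli's inequality
`(1 - δ) 𝔼 D₀² ≤ 𝔼 D₀ + (𝔼 D₀)²` with `δ = p C(n-j-1,k-j-1)`, and Cauchy-Schwarz gives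
`ℙ(D₀ ≠ 0) ≥ (1 - δ) 𝔼 D₀ / (1 + 𝔼 D₀)`. Since `p = O(log n / n^(k-j))`, `δ` tends to `0`, and
`𝔼 D₀` is at least a constant times `exp (-c_n)`, which tends to infinity.
-/

section SecondMoment

lemma sum_powerset_disjoint_pow_mul_pow {α R : Type*} [CommRing R] {s t : Finset α} (hts : t ⊆ s)
    (p : R) :
    ∑ u ∈ s.powerset with Disjoint u t, p ^ u.card * (1 - p) ^ (s.card - u.card) =
      (1 - p) ^ t.card := by
  have avoiding : s.powerset.filter (Disjoint · t) = (s \ t).powerset := by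
    ext u
    simp only [Finset.mem_filter, Finset.mem_powerset, Finset.subset_sdiff]
  have weight_eq : ∀ u ∈ (s \ t).powerset, p ^ u.card * (1 - p) ^ (s.card - u.card) =
      (1 - p) ^ t.card * (p ^ u.card * (1 - p) ^ ((s \ t).card - u.card)) := by
    intro u hu
    have hu_card := Finset.card_le_card (Finset.mem_powerset.1 hu)
    have hs_card := Finset.card_sdiff_add_card_eq_card hts
    rw [show s.card - u.card = t.card + ((s \ t).card - u.card) by omega, pow_add]
    ring
  rw [avoiding, Finset.sum_congr rfl weight_eq, ← Finset.mul_sum, Finset.sum_pow_mul_eq_add_pow,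
    add_sub_cancel, one_pow, mul_one]

variable {n k : ℕ} {p : ℝ}

lemma binomProb_congr {Q Q' : Finset (Finset (Fin n)) → Prop}
    (h : ∀ H ⊆ kSets n k, (Q H ↔ Q' H)) : binomProb n k p Q = binomProb n k p Q' :=
  Finset.sum_congr rfl fun H hH => by simp only [h H (Finset.mem_powerset.1 hH)]

lemma binomProb_disjoint {A : Finset (Finset (Fin n))} (hA : A ⊆ kSets n k) :
    binomProb n k p (Disjoint · A) = (1 - p) ^ A.card := by
  rw [← sum_powerset_disjoint_pow_mul_pow hA, Finset.sum_filter, binomProb]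
  congr! 2

lemma pow_mul_one_sub_pow_nonneg (hp : p ∈ Set.Icc 0 1) (a b : ℕ) : 0 ≤ p ^ a * (1 - p) ^ b :=
  mul_nonneg (pow_nonneg hp.1 a) (pow_nonneg (sub_nonneg.2 hp.2) b)

lemma binomProb_nonneg (hp : p ∈ Set.Icc 0 1) (Q : Finset (Finset (Fin n)) → Prop) :
    0 ≤ binomProb n k p Q :=
  Finset.sum_nonneg fun H _ => by
    split_ifs
    exacts [pow_mul_one_sub_pow_nonneg hp _ _, le_rfl]

lemma binomProb_le_one (hp : p ∈ Set.Icc 0 1) (Q : Finset (Finset (Fin n)) → Prop) :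
    binomProb n k p Q ≤ 1 := by
  calc binomProb n k p Q ≤ binomProb n k p (Disjoint · ∅) := by
        refine Finset.sum_le_sum fun H _ => ?_
        rw [if_pos (Finset.disjoint_empty_right H)]
        split_ifs
        exacts [le_rfl, pow_mul_one_sub_pow_nonneg hp _ _]
    _ = 1 := by rw [binomProb_disjoint (Finset.empty_subset _), Finset.card_empty, pow_zero]

lemma sq_binomExp_le (hp : p ∈ Set.Icc 0 1) (X : Finset (Finset (Fin n)) → ℝ) :
    binomExp n k p X ^ 2 ≤
      binomProb n k p (fun H => X H ≠ 0) * binomExp n k p (fun H => X H ^ 2) := by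
  refine Finset.sum_sq_le_sum_mul_sum_of_sq_le_mul _ (fun H _ => ?_)
    (fun H _ => mul_nonneg (pow_mul_one_sub_pow_nonneg hp _ _) (sq_nonneg _))
    fun H _ => le_of_eq ?_
  · split_ifs
    exacts [pow_mul_one_sub_pow_nonneg hp _ _, le_rfl]
  · split_ifs with hX
    · ring
    · rw [not_not.1 hX]
      ring

lemma one_sub_mul_div_le_binomProb_ne_zero (hp : p ∈ Set.Icc 0 1)
    {X : Finset (Finset (Fin n)) → ℝ} {μ δ : ℝ} (hμ : 0 < μ) (hX : binomExp n k p X = μ)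
    (hX_sq : (1 - δ) * binomExp n k p (fun H => X H ^ 2) ≤ μ + μ ^ 2) :
    (1 - δ) * (μ / (1 + μ)) ≤ binomProb n k p (fun H => X H ≠ 0) := by
  set P := binomProb n k p (fun H => X H ≠ 0)
  have hP : 0 ≤ P := binomProb_nonneg hp _
  rcases le_total δ 1 with hδ | hδ
  · have cauchy_schwarz : μ ^ 2 ≤ P * binomExp n k p (fun H => X H ^ 2) := hX ▸ sq_binomExp_le hp X
    rw [← mul_div_assoc, div_le_iff₀ (by positivity), ← mul_le_mul_iff_left₀ hμ]
    calc (1 - δ) * μ * μ = (1 - δ) * μ ^ 2 := by ring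
      _ ≤ (1 - δ) * (P * binomExp n k p (fun H => X H ^ 2)) :=
          mul_le_mul_of_nonneg_left cauchy_schwarz (sub_nonneg.2 hδ)
      _ = P * ((1 - δ) * binomExp n k p (fun H => X H ^ 2)) := by ring
      _ ≤ P * (μ + μ ^ 2) := mul_le_mul_of_nonneg_left hX_sq hP
      _ = P * (1 + μ) * μ := by ring
  · exact (mul_nonpos_of_nonpos_of_nonneg (sub_nonpos.2 hδ) (by positivity)).trans hP

lemma binomExp_card_filter {ι : Type*} (s : Finset ι) (Q : Finset (Finset (Fin n)) → ι → Prop)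
    [∀ H, DecidablePred (Q H)] :
    binomExp n k p (fun H => ((s.filter (Q H)).card : ℝ)) =
      ∑ i ∈ s, binomProb n k p (fun H => Q H i) := by
  simp only [binomExp, binomProb, Finset.natCast_card_filter, Finset.mul_sum, mul_ite, mul_one,
    mul_zero]
  rw [Finset.sum_comm]
  congr!

lemma binomExp_card_filter_sq {ι : Type*} (s : Finset ι)
    (Q : Finset (Finset (Fin n)) → ι → Prop) [∀ H, DecidablePred (Q H)] :
    binomExp n k p (fun H => ((s.filter (Q H)).card : ℝ) ^ 2) =
      ∑ i ∈ s, ∑ i' ∈ s, binomProb n k p (fun H => Q H i ∧ Q H i') := by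
  rw [← Finset.sum_product' (f := fun i i' => binomProb n k p (fun H => Q H i ∧ Q H i')),
    ← binomExp_card_filter (s ×ˢ s) (fun H x => Q H x.1 ∧ Q H x.2)]
  simp only [Finset.filter_product, Finset.card_product, Nat.cast_mul, sq]

end SecondMoment

section IsolatedSets

variable {n k j : ℕ}

/-- The star of `J` in the complete `k`-uniform hypergraph: the potential edges containing `J`. -/
def edgeStar (n k : ℕ) (J : Finset (Fin n)) : Finset (Finset (Fin n)) :=
  (kSets n k).filter (J ⊆ ·)

lemma edgeStar_subset_kSets (J : Finset (Fin n)) : edgeStar n k J ⊆ kSets n k :=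
  Finset.filter_subset _ _

lemma edgeStar_inter (J J' : Finset (Fin n)) :
    edgeStar n k J ∩ edgeStar n k J' = edgeStar n k (J ∪ J') := by
  simp only [edgeStar, ← Finset.filter_and, Finset.union_subset_iff]

lemma card_edgeStar {J : Finset (Fin n)} (hJ : J.card ≤ k) :
    (edgeStar n k J).card = (n - J.card).choose (k - J.card) := by
  rw [edgeStar, kSets, Finset.card_filter_powersetCard_subset J _ k (Finset.subset_univ J) hJ,
    Finset.card_univ, Fintype.card_fin]

lemma card_edgeStar_le {J : Finset (Fin n)} {m : ℕ} (hmJ : m ≤ J.card) (hmk : m ≤ k) :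
    (edgeStar n k J).card ≤ (n - m).choose (k - m) := by
  obtain ⟨T, hTJ, rfl⟩ := Finset.exists_subset_card_eq hmJ
  rw [← card_edgeStar hmk]
  exact Finset.card_le_card (Finset.monotone_filter_right _ fun e _ hJe => hTJ.trans hJe)

lemma card_edgeStar_inter_le {J J' : Finset (Fin n)} (hjk : j < k) (hJ : J.card = j)
    (hJ' : J'.card = j) (hne : J ≠ J') :
    (edgeStar n k J ∩ edgeStar n k J').card ≤ (n - (j + 1)).choose (k - (j + 1)) := by
  rw [edgeStar_inter]
  refine card_edgeStar_le ?_ hjk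
  have hssub : J ⊂ J ∪ J' := Finset.subset_union_left.ssubset_of_ne fun h =>
    hne (Finset.eq_of_subset_of_card_le (Finset.union_eq_left.1 h.symm) (by omega)).symm
  exact hJ ▸ Finset.card_lt_card hssub

lemma isIsolatedSet_iff_disjoint_edgeStar {H : Finset (Finset (Fin n))} (hH : H ⊆ kSets n k)
    (J : Finset (Fin n)) : IsIsolatedSet H J ↔ Disjoint H (edgeStar n k J) := by
  simp only [IsIsolatedSet, Finset.disjoint_left, edgeStar, Finset.mem_filter, not_and]
  exact forall₂_congr fun e he => ⟨fun h _ => h, fun h => h (hH he)⟩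

lemma setDegree_eq_zero_iff (H : Finset (Finset (Fin n))) (J : Finset (Fin n)) :
    setDegree H J = 0 ↔ IsIsolatedSet H J :=
  Finset.card_eq_zero.trans Finset.filter_eq_empty_iff

lemma numDegSets_zero_ne_zero_iff (H : Finset (Finset (Fin n))) :
    numDegSets n j 0 H ≠ 0 ↔ ∃ J : Finset (Fin n), J.card = j ∧ IsIsolatedSet H J := by
  simp only [numDegSets, setDegree_eq_zero_iff, Finset.card_ne_zero, Finset.filter_nonempty_iff,
    Finset.mem_powersetCard_univ]

lemma not_jConnectedHG_of_isIsolatedSet {H : Finset (Finset (Fin n))} {J : Finset (Fin n)}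
    (hJ : IsIsolatedSet H J) : ¬ JConnectedHG n J.card H := fun hconn =>
  let ⟨e, he, _, _, hJe, _⟩ := hconn J J rfl rfl
  hJ e he hJe

lemma exists_isIsolatedSet_and_not_jConnectedHG_iff (H : Finset (Finset (Fin n))) :
    ((∃ J : Finset (Fin n), J.card = j ∧ IsIsolatedSet H J) ∧ ¬ JConnectedHG n j H) ↔
      (numDegSets n j 0 H : ℝ) ≠ 0 := by
  rw [Nat.cast_ne_zero, numDegSets_zero_ne_zero_iff, and_iff_left_iff_imp]
  rintro ⟨J, rfl, hJ⟩
  exact not_jConnectedHG_of_isIsolatedSet hJ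

end IsolatedSets

section Moments

variable {n k j : ℕ} {p : ℝ}

lemma binomProb_isIsolatedSet_and (J J' : Finset (Fin n)) :
    binomProb n k p (fun H => IsIsolatedSet H J ∧ IsIsolatedSet H J') =
      (1 - p) ^ (edgeStar n k J ∪ edgeStar n k J').card := by
  rw [← binomProb_disjoint (Finset.union_subset (edgeStar_subset_kSets J)
    (edgeStar_subset_kSets J'))]
  refine binomProb_congr fun H hH => ?_
  rw [isIsolatedSet_iff_disjoint_edgeStar hH, isIsolatedSet_iff_disjoint_edgeStar hH,
    Finset.disjoint_union_right]

lemma binomProb_isIsolatedSet (J : Finset (Fin n)) :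
    binomProb n k p (fun H => IsIsolatedSet H J) = (1 - p) ^ (edgeStar n k J).card := by
  simpa only [and_self, Finset.union_self] using binomProb_isIsolatedSet_and J J

lemma binomExp_numDegSets_zero (hjk : j ≤ k) :
    binomExp n k p (fun H => numDegSets n j 0 H) =
      n.choose j * (1 - p) ^ (n - j).choose (k - j) := by
  have prob_eq : ∀ J ∈ Finset.powersetCard j (Finset.univ : Finset (Fin n)),
      binomProb n k p (fun H => IsIsolatedSet H J) = (1 - p) ^ (n - j).choose (k - j) := by
    intro J hJ
    obtain rfl := Finset.mem_powersetCard_univ.1 hJ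
    rw [binomProb_isIsolatedSet, card_edgeStar hjk]
  simp only [numDegSets, setDegree_eq_zero_iff]
  rw [binomExp_card_filter, Finset.sum_congr rfl prob_eq, Finset.sum_const,
    Finset.card_powersetCard, Finset.card_univ, Fintype.card_fin, nsmul_eq_mul]

lemma one_sub_mul_pow_card_union_le {α : Type*} [DecidableEq α] (hp : p ∈ Set.Icc 0 1)
    {s t : Finset α} {d : ℕ} (hd : (s ∩ t).card ≤ d) :
    (1 - p * d) * (1 - p) ^ (s ∪ t).card ≤ (1 - p) ^ s.card * (1 - p) ^ t.card := by
  have hq : 0 ≤ 1 - p := sub_nonneg.2 hp.2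
  have bernoulli : 1 - p * d ≤ (1 - p) ^ d := by
    have := one_add_mul_le_pow (a := -p) (by linarith [hp.2]) d
    rwa [mul_neg, mul_comm, ← sub_eq_add_neg, ← sub_eq_add_neg] at this
  calc (1 - p * d) * (1 - p) ^ (s ∪ t).card
      ≤ (1 - p) ^ d * (1 - p) ^ (s ∪ t).card := by gcongr
    _ = (1 - p) ^ (d + (s ∪ t).card) := (pow_add _ _ _).symm
    _ ≤ (1 - p) ^ (s.card + t.card) :=
        pow_le_pow_of_le_one hq (sub_le_self 1 hp.1) (by
          have := Finset.card_union_add_card_inter s t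
          omega)
    _ = (1 - p) ^ s.card * (1 - p) ^ t.card := pow_add _ _ _

lemma one_sub_mul_binomProb_isIsolatedSet_and_le (hjk : j < k) (hp : p ∈ Set.Icc 0 1)
    {J J' : Finset (Fin n)} (hJ : J.card = j) (hJ' : J'.card = j) :
    (1 - p * (n - (j + 1)).choose (k - (j + 1))) *
        binomProb n k p (fun H => IsIsolatedSet H J ∧ IsIsolatedSet H J') ≤
      (if J = J' then binomProb n k p (fun H => IsIsolatedSet H J) else 0) +
        binomProb n k p (fun H => IsIsolatedSet H J) *
          binomProb n k p (fun H => IsIsolatedSet H J') := by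
  split_ifs with heq
  · subst heq
    simp only [and_self]
    set P := binomProb n k p (fun H => IsIsolatedSet H J)
    have hP : 0 ≤ P := binomProb_nonneg hp _
    have hδ : 0 ≤ p * (n - (j + 1)).choose (k - (j + 1)) := mul_nonneg hp.1 (Nat.cast_nonneg _)
    exact (mul_le_of_le_one_left hP (sub_le_self 1 hδ)).trans
      (le_add_of_nonneg_right (mul_nonneg hP hP))
  · rw [zero_add, binomProb_isIsolatedSet_and, binomProb_isIsolatedSet, binomProb_isIsolatedSet]
    exact one_sub_mul_pow_card_union_le hp (card_edgeStar_inter_le hjk hJ hJ' heq)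

lemma one_sub_mul_binomExp_numDegSets_zero_sq_le (hjk : j < k) (hp : p ∈ Set.Icc 0 1) :
    (1 - p * (n - (j + 1)).choose (k - (j + 1))) *
        binomExp n k p (fun H => (numDegSets n j 0 H : ℝ) ^ 2) ≤
      binomExp n k p (fun H => numDegSets n j 0 H) +
        binomExp n k p (fun H => numDegSets n j 0 H) ^ 2 := by
  simp only [numDegSets, setDegree_eq_zero_iff]
  rw [binomExp_card_filter_sq, binomExp_card_filter, sq, Finset.sum_mul_sum, Finset.mul_sum,
    ← Finset.sum_add_distrib]
  refine Finset.sum_le_sum fun J hJ => ?_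
  set P : Finset (Fin n) → ℝ := fun J => binomProb n k p (fun H => IsIsolatedSet H J)
  rw [Finset.mul_sum]
  calc _ ≤ ∑ J' ∈ Finset.powersetCard j Finset.univ, ((if J = J' then P J else 0) + P J * P J') :=
        Finset.sum_le_sum fun J' hJ' => one_sub_mul_binomProb_isIsolatedSet_and_le hjk hp
          (Finset.mem_powersetCard_univ.1 hJ) (Finset.mem_powersetCard_univ.1 hJ')
    _ = P J + ∑ J' ∈ Finset.powersetCard j Finset.univ, P J * P J' := by
        rw [Finset.sum_add_distrib, Finset.sum_ite_eq, if_pos hJ]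

end Moments

section Asymptotics

lemma tendsto_log_pow_div_natCast (m : ℕ) :
    Tendsto (fun n : ℕ => Real.log n ^ m / n) atTop (nhds 0) :=
  Real.isLittleO_pow_log_id_atTop.tendsto_div_nhds_zero.comp tendsto_natCast_atTop_atTop

lemma tendsto_choose_div_pow (j : ℕ) :
    Tendsto (fun n : ℕ => (n.choose j : ℝ) / n ^ j) atTop (nhds (j.factorial : ℝ)⁻¹) := by
  refine ((isEquivalent_choose j).div IsEquivalent.refl).symm.tendsto_nhds ?_
  refine tendsto_const_nhds.congr' ?_
  filter_upwards [eventually_ne_atTop 0] with n hn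
  simp only [Pi.div_apply]
  field_simp

lemma exp_neg_le_one_sub_pow {x : ℝ} {m : ℕ} (hx : x < 1) (h : x * m * x + x ≤ 1) :
    Real.exp (-(x * m + 1)) ≤ (1 - x) ^ m := by
  have hx' : 0 < 1 - x := sub_pos.2 hx
  rw [← Real.le_log_iff_exp_le (pow_pos hx' m), Real.log_pow]
  calc -(x * m + 1) ≤ m * (1 - (1 - x)⁻¹) := by
        rw [← sub_nonneg]
        have : m * (1 - (1 - x)⁻¹) - -(x * m + 1) = (1 - (x * m * x + x)) / (1 - x) := by
          field_simp
          ring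
        rw [this]
        exact div_nonneg (sub_nonneg.2 h) hx'.le
    _ ≤ m * Real.log (1 - x) := by
        gcongr
        exact Real.one_sub_inv_le_log_of_pos hx'

lemma tendsto_div_one_add_self_atTop : Tendsto (fun x : ℝ => x / (1 + x)) atTop (nhds 1) := by
  have hinv : Tendsto (fun x : ℝ => 1 - (1 + x)⁻¹) atTop (nhds (1 - 0)) :=
    (tendsto_inv_atTop_zero.comp (tendsto_atTop_add_const_left _ 1 tendsto_id)).const_sub 1
  rw [sub_zero] at hinv
  refine hinv.congr' ?_
  filter_upwards [eventually_gt_atTop 0] with x hx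
  field_simp
  ring

variable {r : ℕ} {a : ℝ} {p : ℕ → ℝ}

lemma isBigO_log_div_pow_of_mul_choose_le (hp : ∀ n, 0 ≤ p n)
    (h : ∀ᶠ n : ℕ in atTop, p n * n.choose r ≤ a * Real.log n) :
    p =O[atTop] fun n : ℕ => Real.log n / (n : ℝ) ^ r := by
  have hchoose : p =O[atTop] fun n : ℕ => Real.log n / (n.choose r : ℝ) := by
    refine IsBigO.of_bound a ?_
    filter_upwards [h, eventually_ge_atTop r] with n hn hrn
    have hpos : (0 : ℝ) < n.choose r := by exact_mod_cast Nat.choose_pos hrn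
    rw [Real.norm_of_nonneg (hp n), Real.norm_of_nonneg
      (div_nonneg (Real.log_natCast_nonneg n) hpos.le), ← mul_div_assoc, le_div_iff₀ hpos]
    exact hn
  exact hchoose.trans ((isTheta_refl _ _).div (isTheta_choose r)).isBigO

lemma tendsto_mul_choose_of_isBigO (m : ℕ)
    (hp : p =O[atTop] fun n : ℕ => Real.log n / (n : ℝ) ^ (r + 1)) :
    Tendsto (fun n : ℕ => p n * (n - m).choose r) atTop (nhds 0) := by
  have hchoose : (fun n : ℕ => ((n - m).choose r : ℝ)) =O[atTop] fun n : ℕ => (n : ℝ) ^ r := by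
    refine IsBigO.of_norm_le fun n => ?_
    rw [Real.norm_natCast]
    exact_mod_cast (Nat.choose_le_choose r (Nat.sub_le n m)).trans (Nat.choose_le_pow n r)
  refine (hp.mul hchoose).trans_tendsto ((tendsto_log_pow_div_natCast 1).congr' ?_)
  filter_upwards [eventually_ne_atTop 0] with n hn
  rw [pow_one, pow_succ']
  field_simp

lemma isBigO_log_div_natCast_of_isBigO_log_div_pow
    (hp : p =O[atTop] fun n : ℕ => Real.log n / (n : ℝ) ^ (r + 1)) :
    p =O[atTop] fun n : ℕ => Real.log n / (n : ℝ) := by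
  refine hp.trans (IsBigO.of_bound' ?_)
  filter_upwards [eventually_ge_atTop 1] with n hn
  have hn_one : (1 : ℝ) ≤ n := by exact_mod_cast hn
  rw [Real.norm_of_nonneg (by positivity), Real.norm_of_nonneg (by positivity)]
  gcongr
  exact le_self_pow₀ hn_one r.succ_ne_zero

lemma tendsto_mul_choose_mul_self_of_isBigO
    (hp : p =O[atTop] fun n : ℕ => Real.log n / (n : ℝ) ^ (r + 1)) :
    Tendsto (fun n : ℕ => p n * n.choose (r + 1) * p n) atTop (nhds 0) := by
  refine ((hp.mul (isTheta_choose (r + 1)).isBigO).mul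
    (isBigO_log_div_natCast_of_isBigO_log_div_pow hp)).trans_tendsto
      ((tendsto_log_pow_div_natCast 2).congr' ?_)
  filter_upwards [eventually_ne_atTop 0] with n hn
  rw [div_mul_cancel₀ _ (by positivity), sq, mul_div_assoc]

lemma tendsto_choose_mul_one_sub_pow_atTop {j : ℕ} (hp : ∀ n, 0 ≤ p n)
    (hp_isBigO : p =O[atTop] fun n : ℕ => Real.log n / (n : ℝ) ^ (r + 1))
    (h : Tendsto (fun n : ℕ => p n * n.choose (r + 1) - j * Real.log n) atTop atBot) :
    Tendsto (fun n : ℕ => n.choose j * (1 - p n) ^ (n - j).choose (r + 1)) atTop atTop := by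
  have hp_zero : Tendsto p atTop (nhds 0) :=
    (isBigO_log_div_natCast_of_isBigO_log_div_pow hp_isBigO).trans_tendsto <| by
      simpa only [pow_one] using tendsto_log_pow_div_natCast 1
  have herr : ∀ᶠ n : ℕ in atTop, p n * n.choose (r + 1) * p n + p n ≤ 1 := by
    have := (tendsto_mul_choose_mul_self_of_isBigO hp_isBigO).add hp_zero
    exact this.eventually_le_const (by norm_num)
  have hlower : Tendsto (fun n : ℕ => (n.choose j : ℝ) / n ^ j *
      Real.exp (-(p n * n.choose (r + 1) - j * Real.log n) - 1)) atTop atTop :=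
    (tendsto_choose_div_pow j).pos_mul_atTop (by positivity) <| Real.tendsto_exp_atTop.comp <|
      tendsto_atTop_add_const_right _ _ (tendsto_neg_atBot_atTop.comp h)
  refine tendsto_atTop_mono' _ ?_ hlower
  filter_upwards [herr, hp_zero.eventually_lt_const one_pos, eventually_gt_atTop 0]
    with n hn hp_lt hn_pos
  have hpow : Real.exp (j * Real.log n) = (n : ℝ) ^ j := by
    rw [Real.exp_nat_mul, Real.exp_log (by exact_mod_cast hn_pos)]
  calc (n.choose j : ℝ) / n ^ j * Real.exp (-(p n * n.choose (r + 1) - j * Real.log n) - 1)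
      = n.choose j * Real.exp (-(p n * n.choose (r + 1) + 1)) := by
        rw [show -(p n * n.choose (r + 1) - j * Real.log n) - 1 =
          -(p n * n.choose (r + 1) + 1) + j * Real.log n by ring, Real.exp_add, hpow]
        field_simp
    _ ≤ n.choose j * (1 - p n) ^ n.choose (r + 1) := by
        gcongr
        exact exp_neg_le_one_sub_pow hp_lt hn
    _ ≤ n.choose j * (1 - p n) ^ (n - j).choose (r + 1) := by
        have := hp n
        gcongr ?_ * ?_
        exact pow_le_pow_of_le_one (sub_nonneg.2 hp_lt.le) (sub_le_self 1 this)
          (Nat.choose_le_choose _ (Nat.sub_le n j))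

lemma tendsto_binomProb_numDegSets_zero_ne_zero {k j : ℕ} (hjk : j < k)
    (hp : ∀ n, p n ∈ Set.Icc 0 1)
    (h : Tendsto (fun n : ℕ => p n * n.choose (k - j) - j * Real.log n) atTop atBot) :
    Tendsto (fun n : ℕ => binomProb n k (p n) (fun H => (numDegSets n j 0 H : ℝ) ≠ 0))
      atTop (nhds 1) := by
  have hk_sub : k - j = k - (j + 1) + 1 := by omega
  have hp_isBigO : p =O[atTop] fun n : ℕ => Real.log n / (n : ℝ) ^ (k - (j + 1) + 1) :=
    hk_sub ▸ isBigO_log_div_pow_of_mul_choose_le (fun n => (hp n).1)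
      ((h.eventually_le_atBot 0).mono fun n hn => sub_nonpos.1 hn)
  have hδ := tendsto_mul_choose_of_isBigO (j + 1) hp_isBigO
  set μ : ℕ → ℝ := fun n => n.choose j * (1 - p n) ^ (n - j).choose (k - j)
  have hμ : Tendsto μ atTop atTop := by
    simpa only [← hk_sub] using tendsto_choose_mul_one_sub_pow_atTop (fun n => (hp n).1) hp_isBigO
      (by simpa only [← hk_sub] using h)
  have hratio : Tendsto (fun n => μ n / (1 + μ n)) atTop (nhds 1) :=
    tendsto_div_one_add_self_atTop.comp hμ
  have hlower := (hδ.const_sub 1).mul hratio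
  rw [sub_zero, mul_one] at hlower
  refine tendsto_of_tendsto_of_tendsto_of_le_of_le' hlower tendsto_const_nhds ?_
    (Eventually.of_forall fun n => binomProb_le_one (hp n) _)
  filter_upwards [hμ.eventually_gt_atTop 0] with n hμ_pos
  have hexp : binomExp n k (p n) (fun H => numDegSets n j 0 H) = μ n :=
    binomExp_numDegSets_zero hjk.le
  exact one_sub_mul_div_le_binomProb_ne_zero (hp n) hμ_pos hexp <|
    hexp ▸ one_sub_mul_binomExp_numDegSets_zero_sq_le hjk (hp n)

end Asymptotics

theorem below_threshold_not_connected_general (k j : ℕ) (hjk : j < k) (p c : ℕ → ℝ)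
    (hp01 : ∀ n : ℕ, 0 ≤ p n ∧ p n ≤ 1)
    (hcinf : Tendsto c atTop atBot)
    (hp : ∀ n : ℕ, p n = ((j : ℝ) * Real.log n + c n) / (n.choose (k - j) : ℝ)) :
    Tendsto (fun n : ℕ => binomProb n k (p n) (fun H =>
        (∃ J : Finset (Fin n), J.card = j ∧ IsIsolatedSet H J) ∧ ¬ JConnectedHG n j H))
      atTop (nhds 1) := by
  have hthreshold :
      Tendsto (fun n : ℕ => p n * n.choose (k - j) - j * Real.log n) atTop atBot := by
    refine hcinf.congr' ?_
    filter_upwards [eventually_ge_atTop (k - j)] with n hn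
    have hchoose : (n.choose (k - j) : ℝ) ≠ 0 := by exact_mod_cast (Nat.choose_pos hn).ne'
    rw [hp n, div_mul_cancel₀ _ hchoose, add_sub_cancel_left]
  simpa only [exists_isIsolatedSet_and_not_jConnectedHG_iff] using
    tendsto_binomProb_numDegSets_zero_ne_zero hjk hp01 hthreshold

/-- **Corollary, part 1.** Let `p = (j log n + c_n)/C(n,k-j)` (a probability). If `c_n → -∞`,
then with high probability `H^k(n,p)` contains an isolated `j`-set, and in particular is not
`j`-connected. -/
theorem below_threshold_not_connected (k j : ℕ) (hk : 3 ≤ k) (hj : 1 ≤ j) (hjk : j ≤ k - 1)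
    (p c : ℕ → ℝ)
    (hp01 : ∀ n : ℕ, 0 ≤ p n ∧ p n ≤ 1)
    (hcinf : Tendsto c atTop atBot)
    (hp : ∀ n : ℕ, p n = ((j : ℝ) * Real.log n + c n) / (n.choose (k - j) : ℝ)) :
    Tendsto (fun n : ℕ => binomProb n k (p n) (fun H =>
        (∃ J : Finset (Fin n), J.card = j ∧ IsIsolatedSet H J) ∧ ¬ JConnectedHG n j H))
      atTop (nhds 1) :=
  below_threshold_not_connected_general k j (by omega) p c hp01 hcinf hp

end
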